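/- arXiv:1604.01762 — 2 statements merged into one kernel-verified Lean document; each statement's English description precedes it below -/
import Mathlib

section
/- Let m ≥ n ≥ 2. Let v₁, v₂, ..., vₙ, v_{n+1} ∈ ℝⁿ be n-independent (i.e., every n of them are linearly independent), and let F : ℝⁿ → ℝᵐ be an injection that maps each line in ℒ(v₁, ..., v_{n+1}) onto a line, and assume that parallel lines in this family are mapped onto parallel lines. Then F is affine-additive. Moreover, there exist linearly independent vectors u₁, ..., uₙ ∈ ℝⁿ, linearly independent vectors w₁, ..., wₙ ∈ ℝᵐ, and an additive bijection f : ℝ → ℝ with f(1) = 1, such that for every x = Σᵢ αᵢuᵢ one has F(x) − F(0) = Σᵢ f(αᵢ)wᵢ. -/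
/-- The line through `a` in direction `b`. -/
def lineThru {k : ℕ} (a b : Fin k → ℝ) : Set (Fin k → ℝ) :=
  {x | ∃ t : ℝ, x = a + t • b}

/-- A subset of `ℝᵏ` is a line if it is of the form `a + ℝ b` with `b ≠ 0`. -/
def IsLine {k : ℕ} (s : Set (Fin k → ℝ)) : Prop :=
  ∃ a b : Fin k → ℝ, b ≠ 0 ∧ s = lineThru a b

lemma aux_relation {n : ℕ} (v : Fin (n + 1) → (Fin n → ℝ))
    (hv : ∀ s : Finset (Fin (n + 1)), s.card = n →
      LinearIndependent ℝ (fun i : s => v i.1))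
    (d : Fin (n + 1) → ℝ) (hd : ∑ j, d j • v j = 0) (j₀ : Fin (n + 1)) (h0 : d j₀ = 0) :
    ∀ j, d j = 0 := by
  have hs := hv (Finset.univ.erase j₀) (by simp)
  rw [Fintype.linearIndependent_iff] at hs
  have h1 : ∑ i : (Finset.univ.erase j₀ : Finset (Fin (n+1))), d i.1 • v i.1 = 0 := by
    rw [Finset.sum_coe_sort (Finset.univ.erase j₀) (fun i => d i • v i), ← hd]
    apply Finset.sum_erase
    simp [h0]
  have h2 := hs (fun i => d i.1) h1
  intro j
  by_cases hj : j = j₀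
  · rw [hj, h0]
  · exact h2 ⟨j, by simp [hj]⟩

lemma aux_direction {n m : ℕ} (F : (Fin n → ℝ) → (Fin m → ℝ)) (v : Fin n → ℝ)
    (hpar : ∀ (a₁ a₂ : Fin n → ℝ), ∃ w : Fin m → ℝ, w ≠ 0 ∧
      ∃ c₁ c₂ : Fin m → ℝ,
        F '' lineThru a₁ v = lineThru c₁ w ∧
        F '' lineThru a₂ v = lineThru c₂ w) :
    ∃ w : Fin m → ℝ, (∀ a, ∀ t : ℝ, ∃ s : ℝ, F (a + t • v) = F a + s • w) ∧
      (∀ a, ∀ s : ℝ, ∃ t : ℝ, F (a + t • v) = F a + s • w) := by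
  obtain ⟨w, hw, c, -, hc, -⟩ := hpar 0 0
  have key : ∀ a, ∃ c₂ : Fin m → ℝ, ∃ r : ℝ, r ≠ 0 ∧
      F '' lineThru a v = lineThru c₂ (r • w) := by
    intro a
    obtain ⟨w2, hw2, c1, c2, h1, h2⟩ := hpar 0 a
    rw [hc] at h1
    have m1 : c1 ∈ lineThru c w := by rw [h1]; exact ⟨0, by simp⟩
    have m2 : c1 + w2 ∈ lineThru c w := by rw [h1]; exact ⟨1, by simp⟩
    obtain ⟨t1, e1⟩ := m1
    obtain ⟨t2, e2⟩ := m2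
    have e3 : w2 = (t2 - t1) • w := by
      rw [sub_smul]
      have : w2 = (c1 + w2) - c1 := by abel
      rw [this, e2, e1]; abel
    refine ⟨c2, t2 - t1, ?_, ?_⟩
    · intro h; rw [h, zero_smul] at e3; exact hw2 e3
    · rw [← e3, h2]
  refine ⟨w, ?_, ?_⟩
  · intro a t
    obtain ⟨c2, r, hr, h⟩ := key a
    have m1 : F a ∈ lineThru c2 (r • w) := by
      rw [← h]; exact ⟨a, ⟨0, by simp⟩, rfl⟩
    have m2 : F (a + t • v) ∈ lineThru c2 (r • w) := by
      rw [← h]; exact ⟨_, ⟨t, rfl⟩, rfl⟩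
    obtain ⟨t1, e1⟩ := m1
    obtain ⟨t2, e2⟩ := m2
    refine ⟨(t2 - t1) * r, ?_⟩
    rw [e1, e2]; module
  · intro a s
    obtain ⟨c2, r, hr, h⟩ := key a
    have m1 : F a ∈ lineThru c2 (r • w) := by
      rw [← h]; exact ⟨a, ⟨0, by simp⟩, rfl⟩
    obtain ⟨t1, e1⟩ := m1
    have m2 : F a + s • w ∈ lineThru c2 (r • w) := by
      refine ⟨t1 + s / r, ?_⟩
      rw [e1, add_assoc, smul_smul, smul_smul, ← add_smul, add_mul, div_mul_cancel₀ _ hr]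
    rw [← h] at m2
    obtain ⟨x, ⟨t, rfl⟩, hx⟩ := m2
    exact ⟨t, hx⟩

lemma aux_core {n : ℕ} (hn : 2 ≤ n) {E : Type*} [AddCommGroup E] [Module ℝ E]
    (Φ : (Fin n → ℝ) → E) (hinj : Function.Injective Φ) (h0 : Φ 0 = 0)
    (w : Fin n → E) (w' : E)
    (Ha : ∀ i α, ∀ t : ℝ, ∃ s : ℝ, Φ (α + t • Pi.single i 1) = Φ α + s • w i)
    (Hb : ∀ i α, ∀ s : ℝ, ∃ t : ℝ, Φ (α + t • Pi.single i 1) = Φ α + s • w i)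
    (H2 : ∀ α, ∀ t : ℝ, ∃ s : ℝ, Φ (α + t • 1) = Φ α + s • w') :
    ∃ (u : Fin n → E) (f : ℝ → ℝ), LinearIndependent ℝ u ∧
      Function.Bijective f ∧ (∀ a b : ℝ, f (a + b) = f a + f b) ∧ f 1 = 1 ∧
      ∀ α : Fin n → ℝ, Φ α = ∑ i, f (α i) • u i := by
  classical
  have hw0 : ∀ i, w i ≠ 0 := by
    intro i hi
    obtain ⟨s, hs⟩ := Ha i 0 1
    rw [hi, smul_zero, add_zero] at hs
    have := congrFun (hinj hs) i
    simp at this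
  -- surjectivity onto partial spans
  have hsurj : ∀ (S : Finset (Fin n)) (c : Fin n → ℝ),
      ∃ α : Fin n → ℝ, (∀ i, i ∉ S → α i = 0) ∧ Φ α = ∑ i ∈ S, c i • w i := by
    intro S c
    induction S using Finset.induction_on with
    | empty => exact ⟨0, by simp, by simp [h0]⟩
    | insert i S hi ih =>
      obtain ⟨α, h1, h2⟩ := ih
      obtain ⟨t, ht⟩ := Hb i α (c i)
      refine ⟨α + t • Pi.single i 1, ?_, ?_⟩
      rotate_left
      · rw [ht, Finset.sum_insert hi, h2, add_comm]
      · intro j hj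
        simp only [Finset.mem_insert, not_or] at hj
        simp [h1 j hj.2, hj.1]
  have hli : LinearIndependent ℝ w := by
    rw [linearIndependent_iff']
    intro s g hg i hi
    by_contra hgi
    have e1 : w i = ∑ j ∈ s.erase i, (-(g i)⁻¹ * g j) • w j := by
      rw [← Finset.add_sum_erase _ _ hi] at hg
      have h3 : ∑ j ∈ s.erase i, g j • w j = - (g i • w i) := by
        rw [eq_neg_iff_add_eq_zero, add_comm]; exact hg
      simp_rw [mul_smul]
      rw [← Finset.smul_sum, h3, smul_neg, neg_smul, neg_neg, smul_smul, inv_mul_cancel₀ hgi,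
        one_smul]
    obtain ⟨α, h1, h2⟩ := hsurj (s.erase i) (fun j => -(g i)⁻¹ * g j)
    obtain ⟨t, ht⟩ := Hb i 0 1
    rw [h0, zero_add, zero_add, one_smul] at ht
    rw [← e1, ← ht] at h2
    have h4 := congrFun (hinj h2) i
    rw [h1 i (by simp)] at h4
    have h5 : t = 0 := by simpa using h4.symm
    rw [h5, zero_smul, h0] at ht
    exact hw0 i ht.symm
  -- differences
  have hdiff : ∀ (S : Finset (Fin n)) (α β : Fin n → ℝ), (∀ i, i ∉ S → α i = β i) →
      ∃ c : Fin n → ℝ, (∀ i, i ∉ S → c i = 0) ∧ Φ α = Φ β + ∑ j, c j • w j := by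
    intro S
    induction S using Finset.induction_on with
    | empty =>
      intro α β h
      have : α = β := funext fun i => h i (by simp)
      exact ⟨0, by simp, by simp [this]⟩
    | insert i S hi ih =>
      intro α β h
      obtain ⟨s, hs⟩ := Ha i β (α i - β i)
      obtain ⟨c, hc, h2⟩ := ih α (β + (α i - β i) • Pi.single i 1) (by
        intro j hj
        by_cases hji : j = i
        · subst hji; simp
        · simp [hji, h j (by simp [hji, hj])])
      refine ⟨c + Pi.single i s, ?_, ?_⟩
      · intro j hj
        simp only [Finset.mem_insert, not_or] at hj
        simp [hc j hj.2, hj.1]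
      · rw [h2, hs]
        simp only [Pi.add_apply, add_smul, Finset.sum_add_distrib]
        have : ∑ j, (Pi.single i s : Fin n → ℝ) j • w j = s • w i := by
          rw [Finset.sum_eq_single i]
          · simp
          · intro b _ hb; simp [hb]
          · simp
        rw [this]; abel
  have hf : ∀ i, ∀ t : ℝ, ∃ s : ℝ, Φ (t • Pi.single i 1) = s • w i := by
    intro i t
    obtain ⟨s, hs⟩ := Ha i 0 t
    exact ⟨s, by simpa [h0] using hs⟩
  choose f hf using hf
  have huniq : ∀ c d : Fin n → ℝ, ∑ j, c j • w j = ∑ j, d j • w j → c = d := by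
    intro c d h
    have h1 := (Fintype.linearIndependent_iff.1 hli) (c - d) (by
      simp only [Pi.sub_apply, sub_smul, Finset.sum_sub_distrib, h, sub_self])
    funext j
    have := h1 j
    simp only [Pi.sub_apply] at this
    linarith
  have hrep : ∀ α, Φ α = ∑ i, f i (α i) • w i := by
    intro α
    obtain ⟨g, -, hg⟩ := hdiff Finset.univ α 0 (by simp)
    rw [h0, zero_add] at hg
    rw [hg]
    congr 1
    funext j
    congr 1
    obtain ⟨c, hc, h2⟩ := hdiff (Finset.univ.erase j) α (α j • Pi.single j 1) (by
      intro i hi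
      have : i = j := by simpa using hi
      subst this; simp)
    have h3 : ∑ k, (c + Pi.single j (f j (α j)) : Fin n → ℝ) k • w k = ∑ k, g k • w k := by
      rw [← hg, h2, hf]
      simp only [Pi.add_apply, add_smul, Finset.sum_add_distrib]
      have : ∑ k, (Pi.single j (f j (α j)) : Fin n → ℝ) k • w k = f j (α j) • w j := by
        rw [Finset.sum_eq_single j]
        · simp
        · intro b _ hb; simp [hb]
        · simp
      rw [this]; abel
    have h4 := congrFun (huniq _ _ h3) j
    rw [← h4]
    simp [hc j (by simp)]
  have hf0 : ∀ i, f i 0 = 0 := by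
    intro i
    have h1 := hf i 0
    rw [zero_smul, h0] at h1
    exact (smul_eq_zero.1 h1.symm).resolve_right (hw0 i)
  have hfinj : ∀ i, Function.Injective (f i) := by
    intro i a b hab
    have h1 := hf i a
    rw [hab, ← hf i b] at h1
    simpa using congrFun (hinj h1) i
  have hfsurj : ∀ i, Function.Surjective (f i) := by
    intro i s
    obtain ⟨t, ht⟩ := Hb i 0 s
    rw [h0, zero_add, zero_add, hf] at ht
    exact ⟨t, smul_left_injective ℝ (hw0 i) ht⟩
  have hf1 : ∀ i, f i 1 ≠ 0 := by
    intro i h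
    rw [← hf0 i] at h
    exact one_ne_zero (hfinj i h)
  obtain ⟨s₀, hs₀⟩ := H2 0 1
  have hs₀' : ∑ i, f i 1 • w i = s₀ • w' := by
    rw [h0, zero_add, hrep] at hs₀
    simpa using hs₀
  have i₀ : Fin n := ⟨0, by omega⟩
  have hs₀ne : s₀ ≠ 0 := by
    intro h
    rw [h, zero_smul] at hs₀'
    exact hf1 i₀ (Fintype.linearIndependent_iff.1 hli _ hs₀' i₀)
  have hs : ∀ α : Fin n → ℝ, ∀ t : ℝ, ∃ s : ℝ, ∀ j, f j (α j + t) - f j (α j) = s * f j 1 := by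
    intro α t
    obtain ⟨s, hs⟩ := H2 α t
    refine ⟨s / s₀, fun j => ?_⟩
    have hw' : s • w' = ∑ j, (s / s₀ * f j 1) • w j := by
      simp_rw [mul_smul]
      rw [← Finset.smul_sum, hs₀', smul_smul, div_mul_cancel₀ _ hs₀ne]
    rw [hrep, hrep α, hw', ← Finset.sum_add_distrib] at hs
    simp_rw [← add_smul] at hs
    have h1 := congrFun (huniq _ _ hs) j
    simp at h1
    linarith
  have hh : ∀ j k, j ≠ k → ∀ a b t : ℝ,
      (f j (a + t) - f j a) / f j 1 = (f k (b + t) - f k b) / f k 1 := by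
    intro j k hjk a b t
    obtain ⟨s, hs⟩ := hs (Function.update (fun _ => b) j a) t
    have h1 := hs j
    have h2 := hs k
    rw [Function.update_self] at h1
    rw [Function.update_of_ne hjk.symm] at h2
    rw [h1, h2, mul_div_cancel_right₀ _ (hf1 j), mul_div_cancel_right₀ _ (hf1 k)]
  have hsame : ∀ j k, ∀ t, f j t / f j 1 = f k t / f k 1 := by
    intro j k t
    by_cases hjk : j = k
    · rw [hjk]
    · simpa [hf0] using hh j k hjk 0 0 t
  obtain ⟨k₀, hk₀⟩ : ∃ k₀, i₀ ≠ k₀ := by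
    have : Nontrivial (Fin n) := Fin.nontrivial_iff_two_le.2 hn
    obtain ⟨k, hk⟩ := exists_ne i₀
    exact ⟨k, hk.symm⟩
  refine ⟨fun j => f j 1 • w j, fun t => f i₀ t / f i₀ 1, ?_, ⟨?_, ?_⟩, ?_, ?_, ?_⟩
  · rw [Fintype.linearIndependent_iff]
    intro g hg i
    simp_rw [smul_smul] at hg
    have := Fintype.linearIndependent_iff.1 hli _ hg i
    exact (mul_eq_zero.1 this).resolve_right (hf1 i)
  · intro a b hab
    exact hfinj i₀ ((div_left_inj' (hf1 i₀)).1 hab)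
  · intro y
    obtain ⟨t, ht⟩ := hfsurj i₀ (y * f i₀ 1)
    exact ⟨t, by simp only [ht]; exact mul_div_cancel_right₀ _ (hf1 i₀)⟩
  · intro a b
    have h1 := hh i₀ k₀ hk₀ a 0 b
    have h2 := hsame i₀ k₀ b
    simp only [zero_add, hf0, sub_zero] at h1
    rw [← h2, sub_div] at h1
    simp only
    linarith
  · exact div_self (hf1 i₀)
  · intro α
    rw [hrep]
    refine Finset.sum_congr rfl fun j _ => ?_
    simp only
    rw [smul_smul, hsame i₀ j, div_mul_cancel₀ _ (hf1 j)]

/-- **Theorem (fundamental theorem under a parallelism condition, n+1 directions).**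
If `m ≥ n ≥ 2`, `v₁, …, v_{n+1} ∈ ℝⁿ` are `n`-independent and `F : ℝⁿ → ℝᵐ` is an
injection mapping each line in `ℒ(v₁,…,v_{n+1})` onto a line, so that parallel lines
of the family go to parallel lines, then `F` is affine-additive; moreover there are
linearly independent `u₁,…,uₙ ∈ ℝⁿ`, linearly independent `w₁,…,wₙ ∈ ℝᵐ`, and an
additive bijection `f : ℝ → ℝ` with `f 1 = 1` such that
`F (∑ αᵢ uᵢ) - F 0 = ∑ f (αᵢ) wᵢ`. -/
theorem affine_additive_of_parallelism_nPlusOne_directions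
    {n m : ℕ} (hn : 2 ≤ n) (hnm : n ≤ m)
    (v : Fin (n + 1) → (Fin n → ℝ))
    (hv : ∀ s : Finset (Fin (n + 1)), s.card = n →
      LinearIndependent ℝ (fun i : s => v i.1))
    (F : (Fin n → ℝ) → (Fin m → ℝ))
    (hinj : Function.Injective F)
    (honto : ∀ (i : Fin (n + 1)) (a : Fin n → ℝ), IsLine (F '' lineThru a (v i)))
    (hpar : ∀ (i : Fin (n + 1)) (a₁ a₂ : Fin n → ℝ), ∃ w : Fin m → ℝ, w ≠ 0 ∧
      ∃ c₁ c₂ : Fin m → ℝ,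
        F '' lineThru a₁ (v i) = lineThru c₁ w ∧
        F '' lineThru a₂ (v i) = lineThru c₂ w) :
    (∃ (A : (Fin n → ℝ) → (Fin m → ℝ)) (c : Fin m → ℝ),
      (∀ x y, A (x + y) = A x + A y) ∧ ∀ x, F x = A x + c) ∧
    ∃ (u : Fin n → (Fin n → ℝ)) (w : Fin n → (Fin m → ℝ)) (f : ℝ → ℝ),
      LinearIndependent ℝ u ∧ LinearIndependent ℝ w ∧
      Function.Bijective f ∧ (∀ a b : ℝ, f (a + b) = f a + f b) ∧ f 1 = 1 ∧
      ∀ α : Fin n → ℝ, F (∑ i, α i • u i) - F 0 = ∑ i, f (α i) • w i := by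
  have hli : LinearIndependent ℝ (fun i : Fin n => v i.castSucc) := by
    rw [Fintype.linearIndependent_iff]
    intro g hg i
    have := aux_relation v hv (Fin.snoc g 0) (by
      rw [Fin.sum_univ_castSucc]; simpa using hg) (Fin.last n) (by simp) i.castSucc
    simpa using this
  let B := basisOfLinearIndependentOfCardEqFinrank' (fun i : Fin n => v i.castSucc) hli (by simp)
  have hB : ∀ i, B i = v i.castSucc := fun i => by simp [B]
  obtain ⟨c, hc⟩ : ∃ c : Fin n → ℝ, v (Fin.last n) = ∑ i, c i • v i.castSucc := by
    refine ⟨B.repr (v (Fin.last n)), ?_⟩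
    simp_rw [← hB]
    exact (B.sum_repr _).symm
  have hc0 : ∀ i, c i ≠ 0 := by
    intro i hi
    have := aux_relation v hv (Fin.snoc c (-1)) (by
      rw [Fin.sum_univ_castSucc]; simp [hc]) i.castSucc (by simpa using hi) (Fin.last n)
    simp at this
  let e : Fin n → (Fin n → ℝ) := fun i => c i • v i.castSucc
  have hsum : v (Fin.last n) = ∑ i, e i := hc
  have heli : LinearIndependent ℝ e := by
    rw [Fintype.linearIndependent_iff]
    intro g hg i
    simp only [e, smul_smul] at hg
    have := Fintype.linearIndependent_iff.1 hli _ hg i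
    exact (mul_eq_zero.1 this).resolve_right (hc0 i)
  choose w hwa hwb using fun i => aux_direction F (v i) (hpar i)
  let L : (Fin n → ℝ) → (Fin n → ℝ) := fun α => ∑ i, α i • e i
  have hLinj : Function.Injective L := by
    intro a b hab
    have h1 := Fintype.linearIndependent_iff.1 heli (a - b) (by
      simp only [Pi.sub_apply, sub_smul, Finset.sum_sub_distrib]
      exact sub_eq_zero.2 hab)
    funext j
    exact sub_eq_zero.1 (h1 j)
  have hLsurj : Function.Surjective L := by
    intro x
    refine ⟨fun i => B.repr x i / c i, ?_⟩
    simp only [L, e, smul_smul]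
    conv_rhs => rw [← B.sum_repr x]
    refine Finset.sum_congr rfl fun i _ => ?_
    rw [div_mul_cancel₀ _ (hc0 i), hB]
  have hLadd : ∀ a b, L (a + b) = L a + L b := by
    intro a b
    simp only [L, Pi.add_apply, add_smul, Finset.sum_add_distrib]
  have hL0 : L 0 = 0 := by simp [L]
  have hLs : ∀ i, ∀ t : ℝ, L (t • Pi.single i 1) = (t * c i) • v i.castSucc := by
    intro i t
    simp only [L]
    rw [Finset.sum_eq_single i]
    · simp [e, smul_smul]
    · intro b _ hb; simp [hb]
    · simp
  have hL1 : ∀ t : ℝ, L (t • 1) = t • v (Fin.last n) := by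
    intro t
    simp [L, hsum, Finset.smul_sum]
  obtain ⟨u, f, hu, hfb, hfadd, hf1, hrep⟩ := aux_core hn (fun α => F (L α) - F 0)
    (fun a b hab => hLinj (hinj (sub_left_injective hab))) (by simp [hL0])
    (fun i => w i.castSucc) (w (Fin.last n))
    (by
      intro i α t
      obtain ⟨s, hs⟩ := hwa i.castSucc (L α) (t * c i)
      refine ⟨s, ?_⟩
      simp only [hLadd, hLs, hs]; abel)
    (by
      intro i α s
      obtain ⟨t, hs⟩ := hwb i.castSucc (L α) s
      refine ⟨t / c i, ?_⟩
      simp only [hLadd, hLs]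
      rw [div_mul_cancel₀ _ (hc0 i), hs]; abel)
    (by
      intro α t
      obtain ⟨s, hs⟩ := hwa (Fin.last n) (L α) t
      refine ⟨s, ?_⟩
      simp only [hLadd, hL1, hs]; abel)
  refine ⟨⟨fun x => F x - F 0, F 0, ?_, fun x => by simp⟩, e, u, f, heli, hu, hfb, hfadd, hf1, hrep⟩
  intro x y
  obtain ⟨a, rfl⟩ := hLsurj x
  obtain ⟨b, rfl⟩ := hLsurj y
  have h1 := hrep (a + b)
  have h2 := hrep a
  have h3 := hrep b
  simp only [hLadd, Pi.add_apply, hfadd, add_smul, Finset.sum_add_distrib] at h1 h2 h3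
  simp only
  rw [h1, h2, h3]
end

section
/- Let m ≥ n ≥ 2. Let v₁, v₂, ..., vₙ ∈ ℝⁿ be linearly independent, and let F : ℝⁿ → ℝᵐ be an injection that maps each line in ℒ(v₁, ..., vₙ) onto a line, and moreover assume that parallel lines in this family are mapped onto parallel lines. Then there exist linearly independent vectors u₁, ..., uₙ ∈ ℝⁿ (one may take uᵢ = vᵢ), linearly independent vectors w₁, ..., wₙ ∈ ℝᵐ, and bijective functions f₁, ..., fₙ : ℝ → ℝ with fᵢ(0) = 0 and fᵢ(1) = 1, such that for every x = Σᵢ αᵢuᵢ one has F(x) − F(0) = Σᵢ fᵢ(αᵢ)wᵢ. -/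
open Function in
theorem upd_induct {n : ℕ} (S : Finset (Fin n)) (P : (Fin n → ℝ) → Prop)
    (h : ∀ α, ∀ j ∈ S, ∀ t, P α → P (update α j t)) :
    ∀ α β : Fin n → ℝ, (∀ j, j ∉ S → α j = β j) → P α → P β := by
  induction S using Finset.induction_on with
  | empty =>
    intro α β hab hP
    have : α = β := funext fun j => hab j (by simp)
    exact this ▸ hP
  | insert i S hi ih =>
    intro α β hab hP
    refine ih (fun α j hj => h α j (Finset.mem_insert_of_mem hj)) (update α i (β i)) β ?_
      (h α i (Finset.mem_insert_self _ _) _ hP)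
    intro j hj
    by_cases hji : j = i
    · subst hji; simp
    · rw [update_of_ne hji]
      exact hab j (by simp [hji, hj])

open Function in
theorem diag_core {n m : ℕ} (G : (Fin n → ℝ) → (Fin m → ℝ)) (hG0 : G 0 = 0)
    (hinj : Injective G) (w : Fin n → (Fin m → ℝ))
    (hw1 : ∀ i, w i = G (Pi.single i 1))
    (h1 : ∀ α i t, ∃ s : ℝ, G (update α i t) = G α + s • w i)
    (h2 : ∀ α i (s : ℝ), ∃ t, G (update α i t) = G α + s • w i) :
    ∃ (f : Fin n → ℝ → ℝ),
      LinearIndependent ℝ w ∧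
      (∀ i, Bijective (f i) ∧ f i 0 = 0 ∧ f i 1 = 1) ∧
      ∀ α : Fin n → ℝ, G α = ∑ i, f i (α i) • w i := by
  have hsurj : ∀ (S : Set (Fin n)), ∀ x ∈ Submodule.span ℝ (w '' S),
      ∀ a : ℝ, ∀ α : Fin n → ℝ, (∀ j, j ∉ S → α j = 0) →
        ∃ β : Fin n → ℝ, (∀ j, j ∉ S → β j = 0) ∧ G β = G α + a • x := by
    intro S x hx
    induction hx using Submodule.span_induction with
    | mem x hx =>
      obtain ⟨i, hi, rfl⟩ := hx
      intro a α hα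
      obtain ⟨t, ht⟩ := h2 α i a
      refine ⟨_, ?_, ht⟩
      intro j hj
      have : j ≠ i := fun h => hj (h ▸ hi)
      rw [update_of_ne this, hα j hj]
    | zero => intro a α hα; exact ⟨α, hα, by simp⟩
    | add x y _ _ hx hy =>
      intro a α hα
      obtain ⟨β, hβ, e⟩ := hx a α hα
      obtain ⟨γ, hγ, e'⟩ := hy a β hβ
      exact ⟨γ, hγ, by rw [e', e, smul_add, add_assoc]⟩
    | smul b x _ hx =>
      intro a α hα
      obtain ⟨β, hβ, e⟩ := hx (a * b) α hα
      exact ⟨β, hβ, by rw [e, mul_smul]⟩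
  have hli : LinearIndependent ℝ w := by
    rw [linearIndependent_iff_notMem_span]
    intro i hi
    obtain ⟨β, hβ, e⟩ := hsurj _ _ hi 1 0 (by simp)
    rw [hG0, zero_add, one_smul, hw1] at e
    have := hβ i (by simp)
    rw [hinj e] at this
    simp at this
  have hex : ∀ α, ∃ c : Fin n → ℝ, G α = ∑ i, c i • w i := by
    intro α
    refine upd_induct Finset.univ (fun α => ∃ c : Fin n → ℝ, G α = ∑ i, c i • w i) ?_ 0 α
      (by simp) ⟨0, by simp [hG0]⟩
    rintro α j - t ⟨c, hc⟩
    obtain ⟨s, hs⟩ := h1 α j t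
    refine ⟨c + Pi.single j s, ?_⟩
    rw [hs, hc]
    simp [add_smul, Finset.sum_add_distrib, Pi.single_apply, ite_smul]
  choose c hc using hex
  have huniq : ∀ a b : Fin n → ℝ, ∑ i, a i • w i = ∑ i, b i • w i → a = b := by
    intro a b hab
    have := Fintype.linearIndependent_iff.1 hli (a - b)
      (by simp [sub_smul, Finset.sum_sub_distrib, hab])
    funext i
    have := this i
    simpa [sub_eq_zero] using this
  have hstep : ∀ α j t s, G (update α j t) = G α + s • w j →
      c (update α j t) = c α + Pi.single j s := by
    intro α j t s hs
    apply huniq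
    rw [← hc, hs, hc α]
    simp [add_smul, Finset.sum_add_distrib, Pi.single_apply, ite_smul]
  have hdep : ∀ α i, c α i = c (Pi.single i (α i)) i := by
    intro α i
    refine upd_induct (Finset.univ.erase i) (fun β => c α i = c β i) ?_ α _ ?_ rfl
    · intro β j hj t hβ
      obtain ⟨s, hs⟩ := h1 β j t
      have hij : i ≠ j := fun h => by simp [h] at hj
      rw [hβ, hstep β j t s hs]
      simp [hij]
    · intro j hj
      have : j = i := by simpa using hj
      subst this; simp
  have hc0 : c 0 = 0 := huniq _ _ (by rw [← hc, hG0]; simp)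
  have hsing : ∀ i t, G (Pi.single i t) = c (Pi.single i t) i • w i := by
    intro i t
    obtain ⟨s, hs⟩ := h1 0 i t
    have h := hstep _ _ _ _ hs
    change G (Pi.single i t) = _ at hs
    change c (Pi.single i t) = _ at h
    rw [hs, h, hc0, hG0]; simp
  have hwne : ∀ i, w i ≠ 0 := fun i => hli.ne_zero i
  refine ⟨fun i t => c (Pi.single i t) i, hli, fun i => ⟨⟨?_, ?_⟩, ?_, ?_⟩, ?_⟩
  · intro t t' h
    have h' : c (Pi.single i t) i = c (Pi.single i t') i := h
    have : G (Pi.single i t) = G (Pi.single i t') := by rw [hsing, hsing, h']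
    exact Pi.single_injective i (hinj this)
  · intro s
    obtain ⟨t, ht⟩ := h2 0 i s
    have h := hstep _ _ _ _ ht
    refine ⟨t, ?_⟩
    change c (Pi.single i t) = _ at h
    simp [h, hc0]
  · simp [hc0]
  · have := hsing i 1
    rw [← hw1] at this
    have h2 : (c (Pi.single i 1) i - 1) • w i = 0 := by rw [sub_smul, ← this]; simp
    rcases smul_eq_zero.1 h2 with h | h
    · exact sub_eq_zero.1 h
    · exact absurd h (hwne i)
  · intro α
    rw [hc α]
    exact Finset.sum_congr rfl fun i _ => by rw [hdep α i]

/-- **Theorem (diagonal form under a parallelism condition, n directions).**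
If `m ≥ n ≥ 2`, `v₁,…,vₙ ∈ ℝⁿ` are linearly independent and `F : ℝⁿ → ℝᵐ` is an
injection mapping each line in `ℒ(v₁,…,vₙ)` onto a line, with parallel lines of the
family mapped onto parallel lines, then (taking `uᵢ = vᵢ`) there exist linearly
independent `w₁,…,wₙ ∈ ℝᵐ` and bijections `fᵢ : ℝ → ℝ` with `fᵢ 0 = 0`, `fᵢ 1 = 1`,
such that `F (∑ αᵢ vᵢ) - F 0 = ∑ fᵢ (αᵢ) wᵢ`. -/
theorem diagonal_form_of_parallelism_n_directions
    {n m : ℕ} (hn : 2 ≤ n) (hnm : n ≤ m)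
    (v : Fin n → (Fin n → ℝ)) (hv : LinearIndependent ℝ v)
    (F : (Fin n → ℝ) → (Fin m → ℝ))
    (hinj : Function.Injective F)
    (honto : ∀ (i : Fin n) (a : Fin n → ℝ), IsLine (F '' lineThru a (v i)))
    (hpar : ∀ (i : Fin n) (a₁ a₂ : Fin n → ℝ), ∃ w : Fin m → ℝ, w ≠ 0 ∧
      ∃ c₁ c₂ : Fin m → ℝ,
        F '' lineThru a₁ (v i) = lineThru c₁ w ∧
        F '' lineThru a₂ (v i) = lineThru c₂ w) :
    ∃ (w : Fin n → (Fin m → ℝ)) (f : Fin n → ℝ → ℝ),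
      LinearIndependent ℝ w ∧
      (∀ i, Function.Bijective (f i) ∧ f i 0 = 0 ∧ f i 1 = 1) ∧
      ∀ α : Fin n → ℝ, F (∑ i, α i • v i) - F 0 = ∑ i, f i (α i) • w i := by
  classical
  set L : (Fin n → ℝ) → (Fin n → ℝ) := fun α => ∑ i, α i • v i with hL
  have hL0 : L 0 = 0 := by simp [hL]
  have hLinj : Function.Injective L := by
    intro a b hab
    have hab' : ∑ i, a i • v i = ∑ i, b i • v i := hab
    have := Fintype.linearIndependent_iff.1 hv (a - b)
      (by simp [sub_smul, Finset.sum_sub_distrib, hab'])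
    funext i
    have := this i
    simpa [sub_eq_zero] using this
  have hLupd : ∀ α i t, L (Function.update α i t) = L α + (t - α i) • v i := by
    intro α i t
    have : Function.update α i t = α + Pi.single i (t - α i) := by
      funext j
      by_cases h : j = i
      · subst h; simp
      · simp [h]
    rw [this]
    simp [hL, add_smul, Finset.sum_add_distrib, Pi.single_apply, ite_smul]
  set G : (Fin n → ℝ) → (Fin m → ℝ) := fun α => F (L α) - F 0 with hG
  have hG0 : G 0 = 0 := by simp [hG, hL0]
  have hGinj : Function.Injective G := fun a b h => hLinj (hinj (sub_left_injective h))
  -- image of any line in direction i is a line in direction `G (single i 1)`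
  have hline : ∀ i a, F '' lineThru a (v i) = lineThru (F a) (G (Pi.single i 1)) := by
    intro i a
    obtain ⟨w, hw, c₁, c₂, e₁, e₂⟩ := hpar i a 0
    have hself : F a ∈ lineThru c₁ w := e₁ ▸ ⟨a, ⟨0, by simp⟩, rfl⟩
    have h0 : F 0 ∈ lineThru c₂ w := e₂ ▸ ⟨0, ⟨0, by simp⟩, rfl⟩
    have hLs : L (Pi.single i 1) = v i := by simp [hL, Pi.single_apply, ite_smul]
    have h1 : F (v i) ∈ lineThru c₂ w := e₂ ▸ ⟨v i, ⟨1, by simp⟩, rfl⟩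
    obtain ⟨p, hp⟩ := hself
    obtain ⟨q, hq⟩ := h0
    obtain ⟨r, hr⟩ := h1
    have hGs : G (Pi.single i 1) = (r - q) • w := by
      simp only [hG, hLs]
      rw [hr, hq]
      module
    have hne : r - q ≠ 0 := by
      intro h
      rw [h, zero_smul, ← hG0] at hGs
      have := congrFun (hGinj hGs) i
      simp at this
    rw [e₁, hGs, hp]
    ext x
    constructor
    · rintro ⟨t, rfl⟩
      refine ⟨(t - p) / (r - q), ?_⟩
      rw [smul_smul, div_mul_cancel₀ _ hne]
      module
    · rintro ⟨t, rfl⟩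
      exact ⟨p + t * (r - q), by module⟩
  obtain ⟨f, h1, h2, h3⟩ := diag_core G hG0 hGinj (fun i => G (Pi.single i 1)) (fun _ => rfl)
    (by
      intro α i t
      have : F (L (Function.update α i t)) ∈ lineThru (F (L α)) (G (Pi.single i 1)) := by
        rw [← hline, hLupd]
        exact ⟨_, ⟨_, rfl⟩, rfl⟩
      obtain ⟨s, hs⟩ := this
      refine ⟨s, ?_⟩
      change F (L (Function.update α i t)) - F 0 = F (L α) - F 0 + _
      rw [hs]; abel)
    (by
      intro α i s
      have : F (L α) + s • G (Pi.single i 1) ∈ F '' lineThru (L α) (v i) := by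
        rw [hline]; exact ⟨s, rfl⟩
      obtain ⟨_, ⟨t, rfl⟩, ht⟩ := this
      refine ⟨t + α i, ?_⟩
      change F (L (Function.update α i (t + α i))) - F 0 = F (L α) - F 0 + _
      rw [hLupd, add_sub_cancel_right, ht]; abel)
  exact ⟨_, f, h1, h2, h3⟩
end
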